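/- Let (T,d) be a metric space, let A ⊆ T be dense, let f : A → ℝ be continuous, and suppose that the extensions f_∧^{A:T} and f_∨^{A:T} are real-valued. Let f* : T → ℝ satisfy f_∧^{A:T} ≤ f* ≤ f_∨^{A:T} on T. Then f_∧^{A:T} = (f*)_∧ and f_∨^{A:T} = (f*)_∨ on T. Moreover, if functions f_n : T → ℝ are locally bounded and satisfy, for every x ∈ T and every sequence x_n → x, f_∧^{A:T}(x) ≤ liminf_n f_n(x_n) ≤ limsup_n f_n(x_n) ≤ f_∨^{A:T}(x), then f_n hypi-converges to f*. -/

import Mathlib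

open Filter Topology Metric

variable {T : Type*}

/-- Lower semicontinuous hull of a real-valued function on a metric space,
with values in the extended reals. -/
noncomputable def lscHull [MetricSpace T] (f : T → ℝ) (x : T) : EReal :=
  ⨆ (ε : ℝ) (_ : 0 < ε), ⨅ (y : T) (_ : y ∈ Metric.ball x ε), (f y : EReal)

/-- Upper semicontinuous hull. -/
noncomputable def uscHull [MetricSpace T] (f : T → ℝ) (x : T) : EReal :=
  ⨅ (ε : ℝ) (_ : 0 < ε), ⨆ (y : T) (_ : y ∈ Metric.ball x ε), (f y : EReal)

/-- Locally bounded: bounded on every compact set. -/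
def LocBounded [MetricSpace T] (f : T → ℝ) : Prop :=
  ∀ K : Set T, IsCompact K → ∃ M : ℝ, ∀ x ∈ K, |f x| ≤ M

/-- Hypi-convergence of a sequence of functions via the pointwise criteria. -/
def HypiConv [MetricSpace T] (F : ℕ → T → ℝ) (f : T → ℝ) : Prop :=
  ∀ x : T,
    (∀ u : ℕ → T, Tendsto u atTop (𝓝 x) →
      lscHull f x ≤ liminf (fun n => ((F n (u n) : ℝ) : EReal)) atTop) ∧
    (∃ u : ℕ → T, Tendsto u atTop (𝓝 x) ∧
      limsup (fun n => ((F n (u n) : ℝ) : EReal)) atTop ≤ lscHull f x) ∧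
    (∀ u : ℕ → T, Tendsto u atTop (𝓝 x) →
      limsup (fun n => ((F n (u n) : ℝ) : EReal)) atTop ≤ uscHull f x) ∧
    (∃ u : ℕ → T, Tendsto u atTop (𝓝 x) ∧
      uscHull f x ≤ liminf (fun n => ((F n (u n) : ℝ) : EReal)) atTop)

/-- Lower semicontinuous extension to `T` of a function defined (at least) on `A`:
`f_∧^{A:T}(x) = sup_{ε>0} inf f(B(x,ε) ∩ A)`, with values in the extended reals. -/
noncomputable def lscExt [MetricSpace T] (A : Set T) (f : T → ℝ) (x : T) : EReal :=
  ⨆ (ε : ℝ) (_ : 0 < ε), ⨅ (y : T) (_ : y ∈ Metric.ball x ε ∩ A), (f y : EReal)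

/-- Upper semicontinuous extension to `T` of a function defined (at least) on `A`:
`f_∨^{A:T}(x) = inf_{ε>0} sup f(B(x,ε) ∩ A)`. -/
noncomputable def uscExt [MetricSpace T] (A : Set T) (f : T → ℝ) (x : T) : EReal :=
  ⨅ (ε : ℝ) (_ : 0 < ε), ⨆ (y : T) (_ : y ∈ Metric.ball x ε ∩ A), (f y : EReal)

/-!
In terms of filters, the extensions of `f` are `liminf f (𝓝[A] x)` and `limsup f (𝓝[A] x)`, and the
hulls of `f*` are `liminf f* (𝓝 x)` and `limsup f* (𝓝 x)`. The lower extension is lower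
semicontinuous, so it stays below the lower hull of `f* ≥ f_∧`; on `A` both extensions of the
continuous `f` agree with `f`, hence so does `f*`, and the hull is at most the extension.

The squeeze forces `F n a → f a` for `a ∈ A`. As `liminf f (𝓝[A] x)` is a cluster value of `f` at
`x` along `A`, every neighbourhood of the point `(x, liminf f (𝓝[A] x))` eventually meets the
graph of `F n`, so a diagonal choice of points of these graphs yields a recovery sequence.
-/

section DiagonalSequence

variable {X β : Type*} [TopologicalSpace X] [TopologicalSpace β]

theorem exists_seq_tendsto_of_eventually_inter_nonempty {S : ℕ → Set X} {p : X}
    [(𝓝 p).IsCountablyGenerated]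
    (hS : ∀ U, IsOpen U → p ∈ U → ∀ᶠ n in atTop, (S n ∩ U).Nonempty) :
    ∃ y : ℕ → X, (∀ᶠ n in atTop, y n ∈ S n) ∧ Tendsto y atTop (𝓝 p) := by
  -- Extended by `{p}` at infinity, `S` is lower hemicontinuous there.
  let Φ : OnePoint ℕ → Set X := fun m => m.elim {p} S
  have nhds_infty :
      𝓝 (OnePoint.infty : OnePoint ℕ) = map OnePoint.some atTop ⊔ pure OnePoint.infty := by
    rw [OnePoint.nhds_infty_eq, coclosedCompact_eq_cocompact, cocompact_eq_cofinite,
      Nat.cofinite_eq_atTop]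
  have tendsto_some : Tendsto (OnePoint.some (X := ℕ)) atTop (𝓝 OnePoint.infty) :=
    nhds_infty ▸ tendsto_map.mono_right le_sup_left
  have hΦ : LowerHemicontinuousAt Φ OnePoint.infty := by
    rw [lowerHemicontinuousAt_iff]
    rintro U hU ⟨q, rfl : q = p, hpU⟩
    rw [nhds_infty, eventually_sup, eventually_map, eventually_pure]
    exact ⟨hS U hU hpU, q, rfl, hpU⟩
  exact hΦ.exists_seq_tendsto tendsto_some (Set.mem_singleton p)

theorem exists_seq_tendsto_of_mapClusterPt {A : Set X} {x : X} {L : β} {g : X → β}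
    {F : ℕ → X → β} [(𝓝 x).IsCountablyGenerated] [(𝓝 L).IsCountablyGenerated]
    (hL : MapClusterPt L (𝓝[A] x) g) (hF : ∀ a ∈ A, Tendsto (fun n => F n a) atTop (𝓝 (g a))) :
    ∃ u : ℕ → X, Tendsto u atTop (𝓝 x) ∧ Tendsto (fun n => F n (u n)) atTop (𝓝 L) := by
  have graph_meets : ∀ U, IsOpen U → (x, L) ∈ U →
      ∀ᶠ n in atTop, ({q : X × β | F n q.1 = q.2} ∩ U).Nonempty := by
    intro U hU hxL
    obtain ⟨V, hV, W, hW, hVW⟩ := mem_nhds_prod_iff.1 (hU.mem_nhds hxL)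
    obtain ⟨a, hga, haA, haV⟩ : ∃ a, g a ∈ W ∧ a ∈ A ∧ a ∈ V :=
      ((hL.frequently hW).and_eventually
        (eventually_mem_nhdsWithin.and (mem_nhdsWithin_of_mem_nhds hV))).exists
    have haU : Tendsto (fun n => (a, F n a)) atTop (𝓝 (a, g a)) :=
      tendsto_const_nhds.prodMk_nhds (hF a haA)
    filter_upwards [haU.eventually_mem (hU.mem_nhds (hVW ⟨haV, hga⟩))] with n hn
    exact ⟨(a, F n a), rfl, hn⟩
  have : (𝓝 (x, L)).IsCountablyGenerated := by rw [nhds_prod_eq]; infer_instance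
  obtain ⟨y, hy_graph, hy⟩ := exists_seq_tendsto_of_eventually_inter_nonempty graph_meets
  refine ⟨fun n => (y n).1, hy.fst_nhds, hy.snd_nhds.congr' ?_⟩
  exact hy_graph.mono fun n hn => hn.symm

end DiagonalSequence

section SemicontinuousExtension

variable {X β : Type*} [TopologicalSpace X] [CompleteLinearOrder β] {A : Set X} {g h : X → β}

theorem lowerSemicontinuous_liminf_nhdsWithin (A : Set X) (g : X → β) :
    LowerSemicontinuous fun x => liminf g (𝓝[A] x) := by
  intro x c hc
  simp only [liminf_eq_iSup_iInf, lt_iSup_iff] at hc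
  obtain ⟨s, hs, hcs⟩ := hc
  filter_upwards [eventually_nhds_nhdsWithin.2 hs] with y hy
  exact hcs.trans_le (le_liminf_of_le (h := mem_of_superset hy fun z hz => iInf₂_le z hz))

theorem upperSemicontinuous_limsup_nhdsWithin (A : Set X) (g : X → β) :
    UpperSemicontinuous fun x => limsup g (𝓝[A] x) :=
  lowerSemicontinuous_liminf_nhdsWithin (β := βᵒᵈ) A g

theorem liminf_nhdsWithin_eq_liminf_nhds (hle : ∀ y, liminf g (𝓝[A] y) ≤ h y)
    (hA : ∀ a ∈ A, h a ≤ g a) (x : X) : liminf g (𝓝[A] x) = liminf h (𝓝 x) := by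
  apply le_antisymm
  · exact ((lowerSemicontinuous_liminf_nhdsWithin A g).le_liminf x).trans
      (liminf_le_liminf (.of_forall hle))
  · calc liminf h (𝓝 x) ≤ liminf h (𝓝[A] x) := liminf_le_liminf_of_le nhdsWithin_le_nhds
      _ ≤ liminf g (𝓝[A] x) := liminf_le_liminf (eventually_mem_nhdsWithin.mono hA)

theorem limsup_nhdsWithin_eq_limsup_nhds (hle : ∀ y, h y ≤ limsup g (𝓝[A] y))
    (hA : ∀ a ∈ A, g a ≤ h a) (x : X) : limsup g (𝓝[A] x) = limsup h (𝓝 x) :=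
  liminf_nhdsWithin_eq_liminf_nhds (β := βᵒᵈ) hle hA x

variable [TopologicalSpace β] [OrderTopology β] {a : X}

theorem liminf_nhdsWithin_eq_of_mem (hg : ContinuousWithinAt g A a) (ha : a ∈ A) :
    liminf g (𝓝[A] a) = g a :=
  have : (𝓝[A] a).NeBot := mem_closure_iff_nhdsWithin_neBot.1 (subset_closure ha)
  hg.liminf_eq

theorem limsup_nhdsWithin_eq_of_mem (hg : ContinuousWithinAt g A a) (ha : a ∈ A) :
    limsup g (𝓝[A] a) = g a :=
  liminf_nhdsWithin_eq_of_mem (β := βᵒᵈ) hg ha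

end SemicontinuousExtension

section HypiConvergence

variable {X β : Type*} [TopologicalSpace X] [CompleteLinearOrder β] {A : Set X} {g h : X → β}
  {F : ℕ → X → β}

/-- Hypi-convergence for functions on a topological space with values in a complete linear order.
The lower and upper semicontinuous hulls of `h` at `x` are written as `liminf h (𝓝 x)` and
`limsup h (𝓝 x)`. -/
def HypiTendsto (F : ℕ → X → β) (h : X → β) : Prop :=
  ∀ x : X,
    (∀ u : ℕ → X, Tendsto u atTop (𝓝 x) →
      liminf h (𝓝 x) ≤ liminf (fun n => F n (u n)) atTop) ∧
    (∃ u : ℕ → X, Tendsto u atTop (𝓝 x) ∧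
      limsup (fun n => F n (u n)) atTop ≤ liminf h (𝓝 x)) ∧
    (∀ u : ℕ → X, Tendsto u atTop (𝓝 x) →
      limsup (fun n => F n (u n)) atTop ≤ limsup h (𝓝 x)) ∧
    (∃ u : ℕ → X, Tendsto u atTop (𝓝 x) ∧
      limsup h (𝓝 x) ≤ liminf (fun n => F n (u n)) atTop)

/-- The squeeze condition of the convergence criterion: along every sequence `u n → x`, the
cluster values of `F n (u n)` lie between the lower and upper extensions of `g|_A` at `x`. -/
def SqueezedByExtensions (A : Set X) (g : X → β) (F : ℕ → X → β) : Prop :=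
  ∀ (x : X) (u : ℕ → X), Tendsto u atTop (𝓝 x) →
    liminf g (𝓝[A] x) ≤ liminf (fun n => F n (u n)) atTop ∧
    limsup (fun n => F n (u n)) atTop ≤ limsup g (𝓝[A] x)

variable [TopologicalSpace β] [OrderTopology β]

theorem SqueezedByExtensions.tendsto_of_mem (hF : SqueezedByExtensions A g F)
    (hg : ContinuousOn g A) {a : X} (ha : a ∈ A) :
    Tendsto (fun n => F n a) atTop (𝓝 (g a)) := by
  obtain ⟨hinf, hsup⟩ := hF a (fun _ => a) tendsto_const_nhds
  rw [liminf_nhdsWithin_eq_of_mem (hg a ha) ha] at hinf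
  rw [limsup_nhdsWithin_eq_of_mem (hg a ha) ha] at hsup
  exact tendsto_of_le_liminf_of_limsup_le hinf hsup

theorem SqueezedByExtensions.hypiTendsto [FirstCountableTopology X] [FirstCountableTopology β]
    (hF : SqueezedByExtensions A g F) (hA : Dense A) (hg : ContinuousOn g A)
    (hinf : ∀ x, liminf g (𝓝[A] x) = liminf h (𝓝 x))
    (hsup : ∀ x, limsup g (𝓝[A] x) = limsup h (𝓝 x)) : HypiTendsto F h := by
  intro x
  rw [← hinf x, ← hsup x]
  have hFA : ∀ a ∈ A, Tendsto (fun n => F n a) atTop (𝓝 (g a)) := fun a ha =>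
    hF.tendsto_of_mem hg ha
  have : (𝓝[A] x).NeBot := mem_closure_iff_nhdsWithin_neBot.1 (hA x)
  obtain ⟨u, hu, hFu⟩ :=
    exists_seq_tendsto_of_mapClusterPt (.liminf (f := 𝓝[A] x)) hFA
  obtain ⟨v, hv, hFv⟩ :=
    exists_seq_tendsto_of_mapClusterPt (.limsup (f := 𝓝[A] x)) hFA
  exact ⟨fun w hw => (hF x w hw).1, ⟨u, hu, hFu.limsup_eq.le⟩,
    fun w hw => (hF x w hw).2, ⟨v, hv, hFv.liminf_eq.ge⟩⟩

theorem stmt10_general [FirstCountableTopology X] [FirstCountableTopology β]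
    (hA : Dense A) (hg : ContinuousOn g A)
    (hh : ∀ x, liminf g (𝓝[A] x) ≤ h x ∧ h x ≤ limsup g (𝓝[A] x)) :
    (∀ x, liminf g (𝓝[A] x) = liminf h (𝓝 x) ∧ limsup g (𝓝[A] x) = limsup h (𝓝 x)) ∧
    ∀ F : ℕ → X → β, SqueezedByExtensions A g F → HypiTendsto F h := by
  have hinf : ∀ x, liminf g (𝓝[A] x) = liminf h (𝓝 x) :=
    liminf_nhdsWithin_eq_liminf_nhds (fun y => (hh y).1) fun a ha =>
      (hh a).2.trans_eq (limsup_nhdsWithin_eq_of_mem (hg a ha) ha)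
  have hsup : ∀ x, limsup g (𝓝[A] x) = limsup h (𝓝 x) :=
    limsup_nhdsWithin_eq_limsup_nhds (fun y => (hh y).2) fun a ha =>
      (liminf_nhdsWithin_eq_of_mem (hg a ha) ha).symm.trans_le (hh a).1
  exact ⟨fun x => ⟨hinf x, hsup x⟩, fun F hF => hF.hypiTendsto hA hg hinf hsup⟩

end HypiConvergence

section MetricSpace

variable [MetricSpace T]

theorem lscExt_eq_liminf (A : Set T) (f : T → ℝ) (x : T) :
    lscExt A f x = liminf (fun y => (f y : EReal)) (𝓝[A] x) :=
  nhdsWithin_basis_ball.liminf_eq_iSup_iInf.symm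

theorem uscExt_eq_limsup (A : Set T) (f : T → ℝ) (x : T) :
    uscExt A f x = limsup (fun y => (f y : EReal)) (𝓝[A] x) :=
  nhdsWithin_basis_ball.limsup_eq_iInf_iSup.symm

theorem lscHull_eq_liminf (f : T → ℝ) (x : T) :
    lscHull f x = liminf (fun y => (f y : EReal)) (𝓝 x) :=
  nhds_basis_ball.liminf_eq_iSup_iInf.symm

theorem uscHull_eq_limsup (f : T → ℝ) (x : T) :
    uscHull f x = limsup (fun y => (f y : EReal)) (𝓝 x) :=
  nhds_basis_ball.limsup_eq_iInf_iSup.symm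

theorem hypiConv_iff_hypiTendsto {F : ℕ → T → ℝ} {f : T → ℝ} :
    HypiConv F f ↔ HypiTendsto (fun n y => (F n y : EReal)) fun y => (f y : EReal) := by
  simp only [HypiConv, HypiTendsto, lscHull_eq_liminf, uscHull_eq_limsup]

end MetricSpace

/-- STATEMENT 10: the semicontinuous extensions of a continuous function on a dense
set coincide with the semicontinuous hulls of any function squeezed between them;
and a squeeze criterion for hypi-convergence to such a function. -/
theorem stmt10 [MetricSpace T] (A : Set T) (hA : Dense A)
    (f : T → ℝ) (hf : ContinuousOn f A)
    (hreal : ∀ x : T, lscExt A f x ≠ ⊥ ∧ lscExt A f x ≠ ⊤ ∧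
      uscExt A f x ≠ ⊥ ∧ uscExt A f x ≠ ⊤)
    (fs : T → ℝ)
    (hfs : ∀ x : T, lscExt A f x ≤ (fs x : EReal) ∧ (fs x : EReal) ≤ uscExt A f x) :
    (∀ x : T, lscExt A f x = lscHull fs x ∧ uscExt A f x = uscHull fs x) ∧
    (∀ F : ℕ → T → ℝ, (∀ n, LocBounded (F n)) →
      (∀ (x : T) (u : ℕ → T), Tendsto u atTop (𝓝 x) →
        lscExt A f x ≤ liminf (fun n => ((F n (u n) : ℝ) : EReal)) atTop ∧
        limsup (fun n => ((F n (u n) : ℝ) : EReal)) atTop ≤ uscExt A f x) →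
      HypiConv F fs) := by
  simp only [lscExt_eq_liminf, uscExt_eq_limsup, lscHull_eq_liminf, uscHull_eq_limsup,
    hypiConv_iff_hypiTendsto] at hfs ⊢
  obtain ⟨hulls, hypi⟩ := stmt10_general hA (continuous_coe_real_ereal.comp_continuousOn hf) hfs
  exact ⟨hulls, fun F _ hF => hypi (fun n y => F n y) hF⟩
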